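/- Let T > 0. There exist constants C > 0 and E₀ > 0 such that for all E ≥ E₀ and all v ∈ [0, T]: | √((2√E − v)·v) − (4E)^{1/4}·√v | ≤ C·E^{−1/4}. -/

import Mathlib

/-!
The two terms are `√(a - v) * √v` and `√a * √v` with `a = 2√E`. Multiplying `√(a - v) - √a` by its
conjugate turns it into `-v / (√(a - v) + √a)`, so the terms differ by at most `v√v / √a`, and
`√a = (4E)^{1/4} ≥ E^{1/4}`.
-/

theorem abs_sqrt_sub_sqrt_le_div {a b : ℝ} (ha : 0 ≤ a) (hb : 0 < b) :
    |√a - √b| ≤ |a - b| / √b := by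
  rw [le_div_iff₀ (Real.sqrt_pos.2 hb)]
  calc |√a - √b| * √b ≤ |√a - √b| * (√a + √b) := by
        gcongr
        exact le_add_of_nonneg_left (Real.sqrt_nonneg a)
    _ = |(√a - √b) * (√a + √b)| := by
        rw [abs_mul, abs_of_nonneg (a := √a + √b) (by positivity)]
    _ = |a - b| := by
        rw [mul_comm, ← sq_sub_sq, Real.sq_sqrt ha, Real.sq_sqrt hb.le]

theorem abs_sqrt_sub_mul_self_sub_sqrt_mul_sqrt_le {a v : ℝ} (ha : 0 < a) (hv : 0 ≤ v)
    (hva : v ≤ a) :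
    |√((a - v) * v) - √a * √v| ≤ v * √v / √a := by
  calc |√((a - v) * v) - √a * √v| = |√(a - v) - √a| * √v := by
        rw [Real.sqrt_mul' _ hv, ← sub_mul, abs_mul, abs_of_nonneg (Real.sqrt_nonneg v)]
    _ ≤ |a - v - a| / √a * √v := by
        gcongr
        exact abs_sqrt_sub_sqrt_le_div (sub_nonneg.2 hva) ha
    _ = v * √v / √a := by
        rw [sub_sub_cancel_left, abs_neg, abs_of_nonneg hv, div_mul_eq_mul_div]

theorem sqrt_mul_sqrt_eq_rpow {c x : ℝ} (hc : 0 ≤ c) (hx : 0 ≤ x) :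
    √(c * √x) = (c ^ 2 * x) ^ ((1 : ℝ) / 4) := by
  have mul_sqrt : c * √x = √(c ^ 2 * x) := by
    rw [Real.sqrt_mul (sq_nonneg c), Real.sqrt_sq hc]
  rw [mul_sqrt, Real.sqrt_eq_rpow, Real.sqrt_eq_rpow, ← Real.rpow_mul (by positivity)]
  norm_num

/-- Uniform asymptotic expansion of the phase-integral integrand: for v in a
fixed bounded interval [0, T], √((2√E − v)v) = (4E)^{1/4}√v + O(E^{−1/4})
uniformly, as E → ∞. -/
theorem stmt_19 (T : ℝ) (hT : 0 < T) :
    ∃ C E₀ : ℝ, 0 < C ∧ 0 < E₀ ∧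
      ∀ E : ℝ, E₀ ≤ E →
        ∀ v ∈ Set.Icc (0 : ℝ) T,
          |Real.sqrt ((2 * Real.sqrt E - v) * v) -
              (4 * E) ^ ((1 : ℝ) / 4) * Real.sqrt v| ≤
            C * E ^ (-(1 : ℝ) / 4) := by
  -- `E₀` is the threshold beyond which `2√E - v` is nonnegative on the whole interval.
  refine ⟨T * √T, (T / 2) ^ 2, by positivity, by positivity, ?_⟩
  rintro E hE v ⟨hv, hvT⟩
  have hE_pos : 0 < E := lt_of_lt_of_le (by positivity) hE
  have hv_le : v ≤ 2 * √E := by linarith [Real.le_sqrt_of_sq_le hE]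
  calc |√((2 * √E - v) * v) - (4 * E) ^ ((1 : ℝ) / 4) * √v|
      ≤ v * √v / (4 * E) ^ ((1 : ℝ) / 4) := by
        rw [show (4 : ℝ) * E = 2 ^ 2 * E by norm_num, ← sqrt_mul_sqrt_eq_rpow zero_le_two hE_pos.le]
        exact abs_sqrt_sub_mul_self_sub_sqrt_mul_sqrt_le (by positivity) hv hv_le
    _ ≤ T * √T / E ^ ((1 : ℝ) / 4) := by
        gcongr
        linarith
    _ = T * √T * E ^ (-(1 : ℝ) / 4) := by
        rw [neg_div, Real.rpow_neg hE_pos.le, div_eq_mul_inv]
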